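/- arXiv:1607.07777 — 2 statements merged into one kernel-verified Lean document; each statement's English description precedes it below -/
import Mathlib

section
/- Let R : V × V × V → V be trilinear with R(X,Y)Z = −R(Y,X)Z for all X, Y, Z. Then for every orthonormal basis (e_j) of V and every X ∈ V, R_{ξ_X}(X) := ∑_j R(e_j, ξ_X e_j)X = −(1/2)(R(θ, X)X − R(Jθ, JX)X). -/
open RealInnerProductSpace

/-!
Skewness of `J` turns the torsion into `ξ_X = -(1/4) (θ ∧ X - Jθ ∧ JX)`, where `a ∧ b` is the skew
endomorphism `Y ↦ ⟨a, Y⟩ b - ⟨b, Y⟩ a`. Expanding `a` in the orthonormal basis shows that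
contracting a bilinear map `B` against `Y ↦ ⟨a, Y⟩ b` gives `B a b`, so contracting an antisymmetric
`B` against `a ∧ b` gives `2 B a b`.
-/

section Contraction

open InnerProductSpace

variable {V W ι : Type*} [NormedAddCommGroup V] [InnerProductSpace ℝ V]
  [AddCommGroup W] [Module ℝ W] [Fintype ι]

/-- The contraction `B_T = ∑ j, B (e j) (T (e j))` of a bilinear map `B` against an endomorphism
`T`, as a linear map in `T`. For a curvature-like `R`, taking `B = R(·, ·)X` gives `R_T(X)`. -/
noncomputable def contraction (e : OrthonormalBasis ι ℝ V) (B : V →ₗ[ℝ] V →ₗ[ℝ] W) :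
    (V →ₗ[ℝ] V) →ₗ[ℝ] W :=
  ∑ j, B (e j) ∘ₗ LinearMap.applyₗ (e j)

lemma contraction_apply (e : OrthonormalBasis ι ℝ V) (B : V →ₗ[ℝ] V →ₗ[ℝ] W) (T : V →ₗ[ℝ] V) :
    contraction e B T = ∑ j, B (e j) (T (e j)) := by
  simp [contraction]

lemma contraction_rankOne (e : OrthonormalBasis ι ℝ V) (B : V →ₗ[ℝ] V →ₗ[ℝ] W) (a b : V) :
    contraction e B (rankOne ℝ b a) = B a b := by
  calc contraction e B (rankOne ℝ b a) = B (∑ j, ⟪e j, a⟫ • e j) b := by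
        simp [contraction_apply, real_inner_comm]
    _ = B a b := by rw [e.sum_repr']

/-- The skew endomorphism `a ∧ b : Y ↦ ⟪a, Y⟫ b - ⟪b, Y⟫ a`. -/
noncomputable def wedge (a b : V) : V →ₗ[ℝ] V :=
  rankOne ℝ b a - rankOne ℝ a b

lemma contraction_wedge (e : OrthonormalBasis ι ℝ V) {B : V →ₗ[ℝ] V →ₗ[ℝ] W}
    (hB : ∀ Y Z, B Y Z = -B Z Y) (a b : V) :
    contraction e B (wedge a b) = (2 : ℝ) • B a b := by
  rw [wedge, map_sub, contraction_rankOne, contraction_rankOne, hB b a]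
  module

end Contraction

section Torsion

open InnerProductSpace

variable {V : Type*} [NormedAddCommGroup V] [InnerProductSpace ℝ V] {J : V →ₗ[ℝ] V}

lemma inner_map_right_eq_neg_inner_map_left (hJ2 : ∀ X, J (J X) = -X)
    (hJo : ∀ X Y, ⟪J X, J Y⟫ = ⟪X, Y⟫) (X Y : V) : ⟪X, J Y⟫ = -⟪J X, Y⟫ := by
  rw [← hJo X (J Y), hJ2, inner_neg_right]

lemma rankOne_comp_eq_neg_rankOne_map (hJ : ∀ X Y, ⟪X, J Y⟫ = -⟪J X, Y⟫) (a b : V) :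
    (rankOne ℝ b a : V →ₗ[ℝ] V) ∘ₗ J = -(rankOne ℝ b (J a) : V →ₗ[ℝ] V) := by
  ext Y
  simp [hJ]

/-- The endomorphism `ξ_X` given by the `W₄` intrinsic torsion with Lee vector `θ`, encoded through
rank-one maps so that linearity is built in; `w4Torsion_apply` is the usual formula. -/
noncomputable def w4Torsion (J : V →ₗ[ℝ] V) (θ X : V) : V →ₗ[ℝ] V :=
  -(1 / 4 : ℝ) • ((rankOne ℝ X θ : V →ₗ[ℝ] V) + (rankOne ℝ (J X) θ : V →ₗ[ℝ] V) ∘ₗ J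
    - (rankOne ℝ θ X : V →ₗ[ℝ] V) - (rankOne ℝ (J θ) X : V →ₗ[ℝ] V) ∘ₗ J)

lemma w4Torsion_apply (J : V →ₗ[ℝ] V) (θ X Y : V) :
    w4Torsion J θ X Y =
      -(1 / 4 : ℝ) • (⟪θ, Y⟫ • X + ⟪θ, J Y⟫ • J X - ⟪X, Y⟫ • θ - ⟪X, J Y⟫ • J θ) := by
  simp [w4Torsion]

lemma w4Torsion_eq_wedge_sub_wedge (hJ : ∀ X Y, ⟪X, J Y⟫ = -⟪J X, Y⟫) (θ X : V) :
    w4Torsion J θ X = -(1 / 4 : ℝ) • (wedge θ X - wedge (J θ) (J X)) := by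
  rw [w4Torsion, rankOne_comp_eq_neg_rankOne_map hJ, rankOne_comp_eq_neg_rankOne_map hJ, wedge,
    wedge]
  module

end Torsion

theorem stmt_11_general {V W ι : Type*} [NormedAddCommGroup V] [InnerProductSpace ℝ V]
    [AddCommGroup W] [Module ℝ W] [Fintype ι] (e : OrthonormalBasis ι ℝ V)
    {J : V →ₗ[ℝ] V} (hJ : ∀ X Y, ⟪X, J Y⟫ = -⟪J X, Y⟫)
    {B : V →ₗ[ℝ] V →ₗ[ℝ] W} (hB : ∀ Y Z, B Y Z = -B Z Y) (θ X : V) :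
    contraction e B (w4Torsion J θ X) = -(1 / 2 : ℝ) • (B θ X - B (J θ) (J X)) := by
  rw [w4Torsion_eq_wedge_sub_wedge hJ, map_smul, map_sub, contraction_wedge e hB,
    contraction_wedge e hB]
  module

/-- For a trilinear map `R` with `R(X,Y)Z = -R(Y,X)Z`, every orthonormal
basis `(e_j)` and every `X`,
`R_{ξ_X}(X) = ∑_j R(e_j, ξ_X e_j)X = -(1/2)(R(θ, X)X - R(Jθ, JX)X)`. -/
theorem stmt_11
    {V : Type*} [NormedAddCommGroup V] [InnerProductSpace ℝ V]
    (n : ℕ) (hn : 1 ≤ n) (hdim : Module.finrank ℝ V = 2 * n)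
    (J : V →ₗ[ℝ] V) (hJ2 : ∀ X : V, J (J X) = -X)
    (hJo : ∀ X Y : V, ⟪J X, J Y⟫ = ⟪X, Y⟫)
    (θ : V)
    (ξ : V → V → V)
    (hξ : ∀ X Y : V, ξ X Y =
      -(1 / 4 : ℝ) • (⟪θ, Y⟫ • X + ⟪θ, J Y⟫ • J X - ⟪X, Y⟫ • θ - ⟪X, J Y⟫ • J θ))
    (R : V →ₗ[ℝ] V →ₗ[ℝ] V →ₗ[ℝ] V)
    (hR : ∀ X Y Z : V, R X Y Z = -R Y X Z) :
    ∀ (e : OrthonormalBasis (Fin (2 * n)) ℝ V) (X : V),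
      (∑ j, R (e j) (ξ X (e j)) X) =
        -(1 / 2 : ℝ) • (R θ X X - R (J θ) (J X) X) := by
  intro e X
  have hJ := inner_map_right_eq_neg_inner_map_left hJ2 hJo
  have hξX : ∀ Y, ξ X Y = w4Torsion J θ X Y := fun Y ↦ by rw [hξ, w4Torsion_apply]
  simpa only [hξX, contraction_apply, LinearMap.compr₂_apply, LinearMap.applyₗ_apply_apply] using
    stmt_11_general e hJ (B := R.compr₂ (LinearMap.applyₗ X)) (fun Y Z ↦ hR Y Z X) θ X
end

section
/- For every orthonormal basis (e_j) of V and all X, Y ∈ V, ∑_j ⟨ξ_X e_j, ξ_Y e_j⟩ = 2α²(⟨X,Y⟩ − η(X)η(Y)). Consequently ⟨X,Y⟩ + ∑_j ⟨ξ_X e_j, ξ_Y e_j⟩ = g̃(X,Y), where g̃(X,Y) := (1+2α²)⟨X,Y⟩ − 2α² η(X)η(Y). -/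
open RealInnerProductSpace

/-!
Each `ξ_X` is `α` times the skew endomorphism of the bivector `X ∧ ζ`, so the sum is `α²` times a
Hilbert–Schmidt inner product. By Parseval, Hilbert–Schmidt inner products of rank-one maps factor;
expanding, those of `a ∧ b` and `c ∧ d` give twice the Gram determinant
`⟪a, c⟫ ⟪b, d⟫ - ⟪a, d⟫ ⟪b, c⟫`.
-/

open InnerProductSpace in
theorem sum_inner_rankOne_rankOne {𝕜 E F ι : Type*} [RCLike 𝕜]
    [NormedAddCommGroup E] [InnerProductSpace 𝕜 E]
    [SeminormedAddCommGroup F] [InnerProductSpace 𝕜 F] [Fintype ι]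
    (e : OrthonormalBasis ι 𝕜 E) (a b : F) (x y : E) :
    ∑ j, inner 𝕜 (rankOne 𝕜 a x (e j)) (rankOne 𝕜 b y (e j)) = inner 𝕜 a b * inner 𝕜 y x := by
  calc ∑ j, inner 𝕜 (rankOne 𝕜 a x (e j)) (rankOne 𝕜 b y (e j))
      = ∑ j, inner 𝕜 a b * (inner 𝕜 y (e j) * inner 𝕜 (e j) x) := by
        refine Finset.sum_congr rfl fun j _ => ?_
        rw [inner_left_rankOne_apply, rankOne_apply, inner_smul_right]
        ring
    _ = inner 𝕜 a b * inner 𝕜 y x := by rw [← Finset.mul_sum, e.sum_inner_mul_inner]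

section Bivector

variable {V ι : Type*} [NormedAddCommGroup V] [InnerProductSpace ℝ V] [Fintype ι]

/-- The skew endomorphism `z ↦ ⟪a, z⟫ b - ⟪b, z⟫ a` attached to the bivector `a ∧ b`; with this
sign the torsion `ξ_X` is `α` times the endomorphism of `X ∧ ζ`. -/
noncomputable def bivectorEnd (a b : V) : V →L[ℝ] V :=
  InnerProductSpace.rankOne ℝ b a - InnerProductSpace.rankOne ℝ a b

theorem bivectorEnd_apply (a b z : V) : bivectorEnd a b z = ⟪a, z⟫ • b - ⟪b, z⟫ • a :=
  rfl

theorem sum_inner_bivectorEnd_bivectorEnd (e : OrthonormalBasis ι ℝ V) (a b c d : V) :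
    ∑ j, ⟪bivectorEnd a b (e j), bivectorEnd c d (e j)⟫ =
      2 * (⟪a, c⟫ * ⟪b, d⟫ - ⟪a, d⟫ * ⟪b, c⟫) := by
  simp only [bivectorEnd, sub_apply, inner_sub_left, inner_sub_right, Finset.sum_sub_distrib,
    sum_inner_rankOne_rankOne]
  rw [real_inner_comm a c, real_inner_comm b d, real_inner_comm a d, real_inner_comm b c]
  ring

theorem sum_inner_smul_bivectorEnd (e : OrthonormalBasis ι ℝ V) (ζ X Y : V) (α : ℝ) :
    ∑ j, ⟪α • bivectorEnd X ζ (e j), α • bivectorEnd Y ζ (e j)⟫ =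
      2 * α ^ 2 * (‖ζ‖ ^ 2 * ⟪X, Y⟫ - ⟪ζ, X⟫ * ⟪ζ, Y⟫) := by
  simp only [real_inner_smul_left, real_inner_smul_right, ← Finset.mul_sum]
  rw [sum_inner_bivectorEnd_bivectorEnd, real_inner_self_eq_norm_sq, real_inner_comm ζ X]
  ring

end Bivector

theorem stmt_15_general
    {V ι : Type*} [NormedAddCommGroup V] [InnerProductSpace ℝ V] [Fintype ι]
    (ζ : V) (hζ : ‖ζ‖ = 1)
    (α : ℝ)
    (ξ : V → V → V)
    (hξ : ∀ X Y : V, ξ X Y = α • (⟪X, Y⟫ • ζ - ⟪ζ, Y⟫ • X))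
    (gt : V → V → ℝ)
    (hgt : ∀ X Y : V, gt X Y =
      (1 + 2 * α ^ 2) * ⟪X, Y⟫ - 2 * α ^ 2 * (⟪ζ, X⟫ * ⟪ζ, Y⟫))
    (e : OrthonormalBasis ι ℝ V) (X Y : V) :
    (∑ j, ⟪ξ X (e j), ξ Y (e j)⟫) =
        2 * α ^ 2 * (⟪X, Y⟫ - ⟪ζ, X⟫ * ⟪ζ, Y⟫) ∧
      ⟪X, Y⟫ + (∑ j, ⟪ξ X (e j), ξ Y (e j)⟫) = gt X Y := by
  have hsum : (∑ j, ⟪ξ X (e j), ξ Y (e j)⟫) =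
      2 * α ^ 2 * (⟪X, Y⟫ - ⟪ζ, X⟫ * ⟪ζ, Y⟫) := by
    simp only [hξ, ← bivectorEnd_apply]
    rw [sum_inner_smul_bivectorEnd, hζ, one_pow, one_mul]
  refine ⟨hsum, ?_⟩
  rw [hsum, hgt]
  ring

/-- For every orthonormal basis `(e_j)` of `V` and all `X, Y`,
`∑_j ⟨ξ_X e_j, ξ_Y e_j⟩ = 2α²(⟨X,Y⟩ - η(X)η(Y))`, and consequently
`⟨X,Y⟩ + ∑_j ⟨ξ_X e_j, ξ_Y e_j⟩ = g̃(X,Y)` with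
`g̃(X,Y) = (1+2α²)⟨X,Y⟩ - 2α²η(X)η(Y)`. -/
theorem stmt_15
    {V : Type*} [NormedAddCommGroup V] [InnerProductSpace ℝ V]
    (n : ℕ) (hn : 1 ≤ n) (hdim : Module.finrank ℝ V = 2 * n + 1)
    (ζ : V) (hζ : ‖ζ‖ = 1)
    (α : ℝ)
    (ξ : V → V → V)
    (hξ : ∀ X Y : V, ξ X Y = α • (⟪X, Y⟫ • ζ - ⟪ζ, Y⟫ • X))
    (gt : V → V → ℝ)
    (hgt : ∀ X Y : V, gt X Y =
      (1 + 2 * α ^ 2) * ⟪X, Y⟫ - 2 * α ^ 2 * (⟪ζ, X⟫ * ⟪ζ, Y⟫)) :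
    ∀ (e : OrthonormalBasis (Fin (2 * n + 1)) ℝ V) (X Y : V),
      (∑ j, ⟪ξ X (e j), ξ Y (e j)⟫) =
        2 * α ^ 2 * (⟪X, Y⟫ - ⟪ζ, X⟫ * ⟪ζ, Y⟫) ∧
      ⟪X, Y⟫ + (∑ j, ⟪ξ X (e j), ξ Y (e j)⟫) = gt X Y :=
  stmt_15_general ζ hζ α ξ hξ gt hgt
end
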